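/- Let n ≥ 1, let (Ω, 𝓕, ℙ) be a probability space, and let X, Z : Ω → ℝⁿ be random vectors such that X and Z are independent, Z is integrable with E[Z] = 0, and E[‖Z‖²] = 2 n s for some s ≥ 0. Let G : ℝⁿ → ℝⁿ be Lipschitz continuous with constant L > 0 with E[‖G(X)‖²] < ∞, define Y = X − s G(X) + Z, and assume 2 s² L² ≤ 1/2. Then E[‖Y − X‖²] ≤ 4 s² E[‖G(Y)‖²] + 4 n s. -/

import Mathlib

open MeasureTheory Real

/-!
Write `D = E‖Y - X‖²` and `Y - X = -s G(X) + Z`. Independence and `E Z = 0` kill the cross term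
(`integral_inner_eq_zero_of_indepFun`), so `D = s² E‖G(X)‖² + 2ns`. The Lipschitz bound
`‖G(X)‖² ≤ 2‖G(Y)‖² + 2L²‖Y - X‖²` then gives `D ≤ 2s² E‖G(Y)‖² + 2s²L² D + 2ns`, and the step-size
condition `2s²L² ≤ 1/2` lets the `D` term be absorbed into the left-hand side.

When `‖Z‖²` is not integrable, its Bochner integral is zero by convention; then `2ns = 0`, so
`s = 0` and the claim degenerates to an equality. Hence only `s > 0` needs the argument above.
-/

theorem integral_inner_eq_zero_of_indepFun {Ω E : Type*} [MeasurableSpace Ω] {P : Measure Ω}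
    [NormedAddCommGroup E] [InnerProductSpace ℝ E] [CompleteSpace E] [MeasurableSpace E]
    [BorelSpace E] {U Z : Ω → E} (h : ProbabilityTheory.IndepFun U Z P)
    (hU : Integrable U P) (hZ : Integrable Z P) (hZmean : (∫ ω, Z ω ∂P) = 0) :
    (∫ ω, inner ℝ (U ω) (Z ω) ∂P) = 0 := by
  have key := h.integral_bilin hU hZ (innerSL ℝ)
  rw [hZmean, map_zero] at key
  exact key

theorem langevin_one_step_second_moment_bound {n : ℕ} (hn : 1 ≤ n)
    {Ω : Type*} [MeasurableSpace Ω] (P : Measure Ω) [IsProbabilityMeasure P]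
    (X Z : Ω → EuclideanSpace ℝ (Fin n))
    (hX : Measurable X) (hZ : Measurable Z)
    (hindep : ProbabilityTheory.IndepFun X Z P)
    (hZint : Integrable Z P) (hZmean : (∫ ω, Z ω ∂P) = 0)
    (s : ℝ) (hs : 0 ≤ s) (hZ2 : (∫ ω, ‖Z ω‖ ^ 2 ∂P) = 2 * n * s)
    (G : EuclideanSpace ℝ (Fin n) → EuclideanSpace ℝ (Fin n))
    (L : ℝ) (hL : 0 < L)
    (hGlip : ∀ x y, ‖G x - G y‖ ≤ L * ‖x - y‖)
    (hGX : Integrable (fun ω => ‖G (X ω)‖ ^ 2) P)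
    (Y : Ω → EuclideanSpace ℝ (Fin n))
    (hY : ∀ ω, Y ω = X ω - s • G (X ω) + Z ω)
    (hstep : 2 * s ^ 2 * L ^ 2 ≤ 1 / 2) :
    (∫ ω, ‖Y ω - X ω‖ ^ 2 ∂P)
      ≤ 4 * s ^ 2 * (∫ ω, ‖G (Y ω)‖ ^ 2 ∂P) + 4 * n * s := by
  rcases hs.eq_or_lt with rfl | hs0
  · have h : ∀ ω, Y ω - X ω = Z ω := fun ω => by rw [hY]; simp
    simp [h, hZ2]
  have hn0 : (0 : ℝ) < n := by exact_mod_cast hn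
  have hZsq : Integrable (fun ω => ‖Z ω‖ ^ 2) P := by
    by_contra hni
    rw [integral_undef hni] at hZ2
    have : 0 < 2 * (n : ℝ) * s := by positivity
    linarith
  have hGc : Continuous G :=
    (LipschitzWith.of_dist_le_mul (K := ⟨L, hL.le⟩)
      (fun x y => by rw [dist_eq_norm, dist_eq_norm]; exact hGlip x y)).continuous
  have hGXm : Measurable (fun ω => G (X ω)) := hGc.measurable.comp hX
  have hGXi : Integrable (fun ω => G (X ω)) P :=
    ((memLp_two_iff_integrable_sq_norm hGXm.aestronglyMeasurable).2 hGX).integrable one_le_two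
  have hind : ProbabilityTheory.IndepFun (fun ω => G (X ω)) Z P :=
    hindep.comp hGc.measurable measurable_id
  have hcross := integral_inner_eq_zero_of_indepFun hind hGXi hZint hZmean
  have hinner : Integrable (fun ω => (inner ℝ (G (X ω)) (Z ω) : ℝ)) P :=
    hind.integrable_bilin hGXi hZint (innerSL ℝ)
  have hexp : ∀ ω, ‖Y ω - X ω‖ ^ 2
      = s ^ 2 * ‖G (X ω)‖ ^ 2 + ‖Z ω‖ ^ 2 - 2 * s * inner ℝ (G (X ω)) (Z ω) := by
    intro ω
    have h : Y ω - X ω = Z ω - s • G (X ω) := by rw [hY]; abel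
    rw [h, norm_sub_sq_real, norm_smul, inner_smul_right, mul_pow, Real.norm_eq_abs, sq_abs,
      real_inner_comm]
    ring
  have hDi : Integrable (fun ω => ‖Y ω - X ω‖ ^ 2) P := by
    simp only [hexp]
    exact ((hGX.const_mul _).add hZsq).sub (hinner.const_mul _)
  have hD : (∫ ω, ‖Y ω - X ω‖ ^ 2 ∂P)
      = s ^ 2 * (∫ ω, ‖G (X ω)‖ ^ 2 ∂P) + 2 * n * s := by
    simp only [hexp]
    rw [integral_sub (by exact (hGX.const_mul _).add hZsq) (hinner.const_mul _),
      integral_add (hGX.const_mul _) hZsq, integral_const_mul, integral_const_mul, hcross, hZ2]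
    ring
  have hYm : Measurable Y := by
    have : Y = fun ω => X ω - s • G (X ω) + Z ω := funext hY
    rw [this]
    exact (hX.sub (hGXm.const_smul s)).add hZ
  have hlip : ∀ x y, ‖G x‖ ^ 2 ≤ 2 * ‖G y‖ ^ 2 + 2 * L ^ 2 * ‖x - y‖ ^ 2 := by
    intro x y
    have h1 : ‖G x‖ ≤ ‖G y‖ + L * ‖x - y‖ :=
      (norm_le_norm_add_norm_sub' (G x) (G y)).trans (by gcongr; exact hGlip x y)
    have h2 : ‖G x‖ ^ 2 ≤ (‖G y‖ + L * ‖x - y‖) ^ 2 := by gcongr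
    nlinarith [sq_nonneg (‖G y‖ - L * ‖x - y‖)]
  -- Without integrability of `‖G(Y)‖²` the right-hand integral would be the junk value zero.
  have hGY : Integrable (fun ω => ‖G (Y ω)‖ ^ 2) P := by
    refine ((hGX.const_mul 2).add (hDi.const_mul (2 * L ^ 2))).mono'
      ((hGc.measurable.comp hYm).norm.pow_const 2).aestronglyMeasurable
      (Filter.Eventually.of_forall fun ω => ?_)
    rw [Real.norm_of_nonneg (by positivity)]
    exact hlip (Y ω) (X ω)
  have hA : (∫ ω, ‖G (X ω)‖ ^ 2 ∂P)
      ≤ 2 * (∫ ω, ‖G (Y ω)‖ ^ 2 ∂P) + 2 * L ^ 2 * (∫ ω, ‖Y ω - X ω‖ ^ 2 ∂P) := by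
    rw [← integral_const_mul, ← integral_const_mul,
      ← integral_add (hGY.const_mul _) (hDi.const_mul _)]
    refine integral_mono hGX ((hGY.const_mul _).add (hDi.const_mul _)) fun ω => ?_
    simpa only [norm_sub_rev (X ω) (Y ω)] using hlip (X ω) (Y ω)
  have hD0 : 0 ≤ ∫ ω, ‖Y ω - X ω‖ ^ 2 ∂P := integral_nonneg fun ω => by positivity
  have h1 := mul_le_mul_of_nonneg_left hA (sq_nonneg s)
  -- The step-size condition absorbs half of `E‖Y - X‖²`.
  have h2 := mul_le_mul_of_nonneg_right hstep hD0
  linarith
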